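/- Let N, d be natural numbers at least 2, let 1 ≤ k ≤ d − 1, and let σ, δ > 0 with σ < δ/2. If 2σ/δ > 4832 · N^{−2/k}, then there exists a δ-separated dataset D of size N with 2 classes in ℝ^d that is not (σ, k)-preservable, i.e., no linear map T : ℝ^d → ℝ^k of rank k satisfies ‖a − a'‖₂ ≤ ‖T(a) − T(a')‖₂ for all differently labeled (x,y), (x',y') ∈ D and all a ∈ B₂^d(x, σ), a' ∈ B₂^d(x', σ). -/

import Mathlib

open scoped ENNReal BigOperators

noncomputable section

/-- A multilayer perceptron (feedforward ReLU network) with input dimension `m`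
and output dimension `n`, given as a nonempty list of affine layers. -/
inductive MLP : ℕ → ℕ → Type
  | last : {m n : ℕ} → Matrix (Fin n) (Fin m) ℝ → (Fin n → ℝ) → MLP m n
  | cons : {m h n : ℕ} → Matrix (Fin h) (Fin m) ℝ → (Fin h → ℝ) → MLP h n → MLP m n

/-- Evaluation of an MLP: every affine layer except the last is followed by a
coordinatewise ReLU. -/
def MLP.eval : {m n : ℕ} → MLP m n → (Fin m → ℝ) → Fin n → ℝ
  | _, _, .last W b, x => W.mulVec x + b
  | _, _, .cons W b rest, x => MLP.eval rest fun i => max ((W.mulVec x + b) i) 0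

/-- Depth of an MLP: the number of affine layers. -/
def MLP.depth : {m n : ℕ} → MLP m n → ℕ
  | _, _, .last _ _ => 1
  | _, _, .cons _ _ rest => MLP.depth rest + 1

/-- Width of an MLP: the maximum of the hidden-layer dimensions. -/
def MLP.width : {m n : ℕ} → MLP m n → ℕ
  | _, _, .last _ _ => 0
  | _, _, @MLP.cons _ h _ _ _ rest => max h (MLP.width rest)

/-- The `l_p` (quasi-)norm on `ℝ^d`, for `p ∈ (0,∞]`. -/
def lpNorm (p : ℝ≥0∞) {d : ℕ} (x : Fin d → ℝ) : ℝ :=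
  if p = ⊤ then ⨆ i, |x i| else (∑ i, |x i| ^ p.toReal) ^ (1 / p.toReal)

/-- The `l_p` norm on `ℝ^d` with a real exponent `p`. -/
def lpNormR (p : ℝ) {d : ℕ} (x : Fin d → ℝ) : ℝ := (∑ i, |x i| ^ p) ^ (1 / p)

/-- `1/p`, with the convention `1/∞ = 0`. -/
def rinv (p : ℝ≥0∞) : ℝ := if p = ⊤ then 0 else 1 / p.toReal

/-- `c_p^+(d) = d^{[1/2 - 1/p]_+}`. -/
def cplus (p : ℝ≥0∞) (d : ℕ) : ℝ := (d : ℝ) ^ max ((1 : ℝ) / 2 - rinv p) 0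

/-- `c_p^-(d) = d^{[1/2 - 1/p]_-}`. -/
def cminus (p : ℝ≥0∞) (d : ℕ) : ℝ := (d : ℝ) ^ min ((1 : ℝ) / 2 - rinv p) 0

/-- A dataset is `(δ, q)`-separated if the minimal `l_q` distance between
differently labeled points equals `δ`. -/
def Separated {N d : ℕ} (q : ℝ≥0∞) (δ : ℝ) (X : Fin N → Fin d → ℝ) (Y : Fin N → ℕ) : Prop :=
  (∀ i j, Y i ≠ Y j → δ ≤ lpNorm q (X i - X j)) ∧
    ∃ i j, Y i ≠ Y j ∧ lpNorm q (X i - X j) = δ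

/-- `f` `(σ, p)`-robustly memorizes the dataset `(X, Y)`. -/
def RobustMem {N d : ℕ} (p : ℝ≥0∞) (σ : ℝ) (X : Fin N → Fin d → ℝ) (Y : Fin N → ℕ)
    (f : (Fin d → ℝ) → ℝ) : Prop :=
  ∀ i, ∀ x : Fin d → ℝ, lpNorm p (x - X i) ≤ σ → f x = (Y i : ℝ)

/-- A matrix `M` `(σ, k)`-preserves a dataset: Euclidean distances between points of
`σ`-neighborhoods (in `l₂`) of differently labeled data points do not decrease. -/
def Preserves {N d m : ℕ} (σ : ℝ) (X : Fin N → Fin d → ℝ) (Y : Fin N → ℕ)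
    (M : Matrix (Fin m) (Fin d) ℝ) : Prop :=
  ∀ i j, Y i ≠ Y j → ∀ a a' : Fin d → ℝ,
    lpNorm 2 (a - X i) ≤ σ → lpNorm 2 (a' - X j) ≤ σ →
      lpNorm 2 (a - a') ≤ lpNorm 2 (M.mulVec a - M.mulVec a')

/-- The `l₂ → l₂` (spectral) operator norm of a matrix. -/
def matOpNorm {m d : ℕ} (M : Matrix (Fin m) (Fin d) ℝ) : ℝ :=
  sSup {c | ∃ x : Fin d → ℝ, lpNorm 2 x ≤ 1 ∧ c = lpNorm 2 (M.mulVec x)}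

/-- Generalized binomial coefficient `C(s, m) = s(s-1)⋯(s-m+1)/m!`. -/
def gchoose (s : ℝ) (m : ℕ) : ℝ := (∏ i ∈ Finset.range m, (s - (i : ℝ))) / (m.factorial : ℝ)

open MeasureTheory Module in
/-- Volume bound on the size of a separated set inside a ball. -/
lemma aux_card_le {E : Type*} [NormedAddCommGroup E] [NormedSpace ℝ E] [FiniteDimensional ℝ E]
    (s : Finset E) (R ε : ℝ) (hR : 0 ≤ R) (hε : 0 < ε) (hs : ∀ c ∈ s, ‖c‖ ≤ R)
    (h : ∀ c ∈ s, ∀ d ∈ s, c ≠ d → ε ≤ ‖c - d‖) :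
    (s.card : ℝ) ≤ (1 + 2 * R / ε) ^ finrank ℝ E := by
  borelize E
  let μ : Measure E := Measure.addHaar
  have hδ : 0 < ε / 2 := by positivity
  have ρpos : 0 < ε / 2 + R := by positivity
  set A := ⋃ c ∈ s, Metric.ball (c : E) (ε / 2) with hA
  have D : Set.Pairwise (s : Set E) (Function.onFun Disjoint fun c => Metric.ball (c : E) (ε / 2)) := by
    rintro c hc d hd hcd
    apply Metric.ball_disjoint_ball
    rw [dist_eq_norm]
    have := h c hc d hd hcd
    linarith
  have A_subset : A ⊆ Metric.ball (0 : E) (ε / 2 + R) := by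
    refine Set.iUnion₂_subset fun x hx => ?_
    apply Metric.ball_subset_ball'
    rw [dist_zero_right]
    have := hs x hx
    linarith
  have I :
    (s.card : ℝ≥0∞) * ENNReal.ofReal ((ε / 2) ^ finrank ℝ E) * μ (Metric.ball 0 1) ≤
      ENNReal.ofReal ((ε / 2 + R) ^ finrank ℝ E) * μ (Metric.ball 0 1) :=
    calc
      (s.card : ℝ≥0∞) * ENNReal.ofReal ((ε / 2) ^ finrank ℝ E) * μ (Metric.ball 0 1) = μ A := by
        rw [hA, measure_biUnion_finset D fun c _ => measurableSet_ball]
        simp only [μ.addHaar_ball_of_pos _ hδ]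
        simp only [Finset.sum_const, nsmul_eq_mul, mul_assoc]
      _ ≤ μ (Metric.ball (0 : E) (ε / 2 + R)) := measure_mono A_subset
      _ = ENNReal.ofReal ((ε / 2 + R) ^ finrank ℝ E) * μ (Metric.ball 0 1) := by
        simp only [μ.addHaar_ball_of_pos _ ρpos]
  have J : (s.card : ℝ≥0∞) * ENNReal.ofReal ((ε / 2) ^ finrank ℝ E) ≤
      ENNReal.ofReal ((ε / 2 + R) ^ finrank ℝ E) :=
    (ENNReal.mul_le_mul_iff_left (Metric.measure_ball_pos _ _ zero_lt_one).ne'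
      measure_ball_lt_top.ne).1 I
  have K := ENNReal.toReal_le_of_le_ofReal (pow_nonneg ρpos.le _) J
  rw [ENNReal.toReal_mul, ENNReal.toReal_natCast, ENNReal.toReal_ofReal (by positivity)] at K
  have e : 1 + 2 * R / ε = (ε / 2 + R) / (ε / 2) := by field_simp
  rw [e, div_pow, le_div_iff₀ (by positivity)]
  exact K

open Module in
/-- Nets of controlled size. -/
lemma aux_net {E : Type*} [NormedAddCommGroup E] [NormedSpace ℝ E] [FiniteDimensional ℝ E]
    (S : Set E) (R ε : ℝ) (hR : 0 ≤ R) (hε : 0 < ε) (hS : ∀ c ∈ S, ‖c‖ ≤ R) :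
    ∃ t : Finset E, (∀ c ∈ t, c ∈ S) ∧ (t.card : ℝ) ≤ (1 + 2 * R / ε) ^ finrank ℝ E ∧
      ∀ x ∈ S, ∃ y ∈ t, ‖x - y‖ ≤ ε := by
  classical
  let good : Finset E → Prop := fun t => (∀ c ∈ t, c ∈ S) ∧
    ∀ c ∈ t, ∀ d ∈ t, c ≠ d → ε ≤ ‖c - d‖
  have hb : ∀ t, good t → (t.card : ℝ) ≤ (1 + 2 * R / ε) ^ finrank ℝ E := fun t ht =>
    aux_card_le t R ε hR hε (fun c hc => hS c (ht.1 c hc)) ht.2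
  let K : Set ℕ := {n | ∃ t, good t ∧ t.card = n}
  have hK : BddAbove K := by
    refine ⟨⌊(1 + 2 * R / ε) ^ finrank ℝ E⌋₊, ?_⟩
    rintro n ⟨t, ht, rfl⟩
    exact Nat.le_floor (hb t ht)
  have hKne : K.Nonempty := ⟨0, ∅, ⟨by simp, by simp⟩, by simp⟩
  obtain ⟨t, ht, htc⟩ := Nat.sSup_mem hKne hK
  refine ⟨t, ht.1, hb t ht, fun x hx => ?_⟩
  by_contra! hcon
  have hxt : x ∉ t := fun hxt => by
    have := hcon x hxt
    simp at this
    linarith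
  have hg : good (insert x t) := by
    refine ⟨?_, ?_⟩
    · intro c hc
      rcases Finset.mem_insert.1 hc with rfl | hc
      · exact hx
      · exact ht.1 c hc
    · intro c hc d hd hcd
      rcases Finset.mem_insert.1 hc with rfl | hc <;> rcases Finset.mem_insert.1 hd with rfl | hd
      · exact absurd rfl hcd
      · exact (hcon d hd).le
      · rw [norm_sub_rev]; exact (hcon c (by assumption)).le
      · exact ht.2 c hc d hd hcd
  have := le_csSup hK (show (insert x t).card ∈ K from ⟨_, hg, rfl⟩)
  rw [Finset.card_insert_of_notMem hxt, ← htc] at this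
  omega

open Module in
/-- Two-scale net of the ball of radius `7/4` of a hyperplane. -/
lemma aux_two_scale {E : Type*} [NormedAddCommGroup E] [NormedSpace ℝ E] [FiniteDimensional ℝ E]
    (s : ℝ) (hs : 0 < s) (hs1 : s < 1) :
    ∃ A B : Finset E, (∀ a ∈ A, ‖a‖ ≤ 7 / 4) ∧ (∀ b ∈ B, ‖b‖ ≤ 4 / 3) ∧
      (A.card : ℝ) ≤ (11 / 3 / s) ^ finrank ℝ E ∧ (B.card : ℝ) ≤ (11 / 3 / s) ^ finrank ℝ E ∧
      ∀ w : E, ‖w‖ ≤ 7 / 4 → ∃ a ∈ A, ∃ b ∈ B, ‖a - b - w‖ ≤ s ^ 2 := by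
  obtain ⟨A, hA, hAc, hAn⟩ := aux_net (Metric.closedBall (0 : E) (7 / 4)) (7 / 4) (4 / 3 * s)
    (by norm_num) (by positivity) (by simp)
  obtain ⟨B, hB, hBc, hBn⟩ := aux_net (Metric.closedBall (0 : E) (4 / 3 * s)) (4 / 3 * s) (s ^ 2)
    (by positivity) (by positivity) (by simp)
  refine ⟨A, B, fun a ha => by simpa using hA a ha, fun b hb => ?_, hAc.trans ?_, hBc.trans ?_, ?_⟩
  · have := hB b hb
    simp at this
    linarith
  · apply pow_le_pow_left₀ (by positivity)
    rw [le_div_iff₀ hs]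
    have : (1 + 2 * (7 / 4) / (4 / 3 * s)) * s = s + 21 / 8 := by field_simp; ring
    rw [this]; linarith
  · apply pow_le_pow_left₀ (by positivity)
    rw [le_div_iff₀ hs]
    have : (1 + 2 * (4 / 3 * s) / s ^ 2) * s = s + 8 / 3 := by field_simp; ring
    rw [this]; linarith
  · intro w hw
    obtain ⟨a, ha, haw⟩ := hAn w (by simpa using hw)
    obtain ⟨b, hb, hbw⟩ := hBn (a - w) (by simpa [norm_sub_rev] using haw)
    refine ⟨a, ha, b, hb, ?_⟩
    convert hbw using 2
    abel

/-- Geometry: a direction close to a pole `p` meets the affine hyperplane `p + pᗮ` near `p`. -/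
lemma aux_geom {E : Type*} [NormedAddCommGroup E] [InnerProductSpace ℝ E] (p u : E)
    (hp : ‖p‖ = 1) (hu : ‖u‖ = 1) (hpu : ‖u - p‖ ≤ 1) :
    ∃ l : ℝ, l ≠ 0 ∧ inner ℝ p (l • u - p) = 0 ∧ ‖l • u - p‖ ≤ 7 / 4 := by
  have h1 : ‖u - p‖ ^ 2 ≤ 1 := by nlinarith [norm_nonneg (u - p)]
  rw [norm_sub_sq_real, hp, hu, real_inner_comm] at h1
  set c := inner ℝ p u with hc
  have hc2 : 1 / 2 ≤ c := by linarith
  have hc0 : c ≠ 0 := by linarith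
  refine ⟨c⁻¹, inv_ne_zero hc0, ?_, ?_⟩
  · rw [inner_sub_right, inner_smul_right, ← hc, real_inner_self_eq_norm_sq, hp]
    field_simp
    ring
  · refine (abs_le_of_sq_le_sq' ?_ (by norm_num)).2
    rw [norm_sub_sq_real, norm_smul, inner_smul_left, real_inner_comm, ← hc, hp, hu]
    simp only [Real.norm_eq_abs, mul_one, sq_abs, conj_trivial]
    rw [inv_mul_cancel₀ hc0]
    have : c⁻¹ ≤ 2 := by
      rw [inv_le_comm₀ (by linarith) (by norm_num)]; linarith
    have h0 : 0 ≤ c⁻¹ := by rw [inv_nonneg]; linarith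
    nlinarith

open Module in
lemma aux_main {F : Type*} [NormedAddCommGroup F] [InnerProductSpace ℝ F] [FiniteDimensional ℝ F]
    (k : ℕ) (hk : 1 ≤ k) (hF : finrank ℝ F = k + 1) (s : ℝ) (hs : 0 < s) (hs1 : s < 1) :
    ∃ S1 S2 : Finset F, ((S1.card + S2.card : ℕ) : ℝ) ≤ (66 / s) ^ k ∧
      (∀ x ∈ S1, ∀ y ∈ S2, 1 ≤ ‖x - y‖) ∧
      ∀ u : F, ‖u‖ = 1 → ∃ x ∈ S1, ∃ y ∈ S2, ∃ l : ℝ, l ≠ 0 ∧ ‖x - y - l • u‖ ≤ s ^ 2 := by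
  classical
  obtain ⟨P, hP, hPc, hPn⟩ := aux_net (Metric.sphere (0 : F) 1) 1 1
    (by norm_num) (by norm_num) (by intro c hc; simpa using (le_of_eq (by simpa using hc)))
  have hP' : ∀ p ∈ P, ‖p‖ = 1 := fun p hp => by simpa using hP p hp
  rw [hF] at hPc
  have hex : ∀ p : F, ∃ A B : Finset F, p ∈ P →
      (∀ a ∈ A, ‖a‖ ≤ 7 / 4 ∧ inner ℝ p a = 0) ∧ (∀ b ∈ B, ‖b‖ ≤ 4 / 3 ∧ inner ℝ p b = 0) ∧
      (A.card : ℝ) ≤ (11 / 3 / s) ^ k ∧ (B.card : ℝ) ≤ (11 / 3 / s) ^ k ∧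
      ∀ w : F, inner ℝ p w = 0 → ‖w‖ ≤ 7 / 4 → ∃ a ∈ A, ∃ b ∈ B, ‖a - b - w‖ ≤ s ^ 2 := by
    intro p
    by_cases hp : p ∈ P
    swap
    · exact ⟨∅, ∅, fun h => absurd h hp⟩
    have hp0 : p ≠ 0 := by
      intro h; have := hP' p hp; simp [h] at this
    have hfr : finrank ℝ (ℝ ∙ p)ᗮ = k := by
      have : Fact (finrank ℝ F = k + 1) := ⟨hF⟩
      exact Submodule.finrank_orthogonal_span_singleton hp0
    obtain ⟨A, B, h1, h2, h3, h4, h5⟩ := aux_two_scale (E := (ℝ ∙ p)ᗮ) s hs hs1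
    rw [hfr] at h3 h4
    refine ⟨A.image Subtype.val, B.image Subtype.val, fun _ => ⟨?_, ?_, ?_, ?_, ?_⟩⟩
    · intro a ha
      obtain ⟨a, ha', rfl⟩ := Finset.mem_image.1 ha
      exact ⟨h1 a ha', Submodule.mem_orthogonal_singleton_iff_inner_right.1 a.2⟩
    · intro a ha
      obtain ⟨a, ha', rfl⟩ := Finset.mem_image.1 ha
      exact ⟨h2 a ha', Submodule.mem_orthogonal_singleton_iff_inner_right.1 a.2⟩
    · exact le_trans (by exact_mod_cast Finset.card_image_le) h3
    · exact le_trans (by exact_mod_cast Finset.card_image_le) h4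
    · intro w hw hwn
      obtain ⟨a, ha, b, hb, hab⟩ := h5
        ⟨w, Submodule.mem_orthogonal_singleton_iff_inner_right.2 hw⟩ hwn
      exact ⟨a, Finset.mem_image_of_mem _ ha, b, Finset.mem_image_of_mem _ hb, hab⟩
  choose A B hAB using hex
  have : Nontrivial F := Module.nontrivial_of_finrank_pos (R := ℝ) (by omega)
  obtain ⟨e, he⟩ := exists_norm_eq F (zero_le_one (α := ℝ))
  obtain ⟨g, hg⟩ : ∃ g : F → ℕ, ∀ p ∈ P, ∀ q ∈ P, g p = g q → p = q := by
    refine ⟨fun p => if h : p ∈ P then (P.equivFin ⟨p, h⟩ : ℕ) else 0, ?_⟩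
    intro p hp q hq h
    simp only [hp, hq, dite_true] at h
    have := P.equivFin.injective (Fin.ext h)
    simpa using this
  let z : F → F := fun p => (10 * (g p : ℝ)) • e
  have hz : ∀ p ∈ P, ∀ q ∈ P, p ≠ q → 10 ≤ ‖z p - z q‖ := by
    intro p hp q hq hpq
    have h1 : g p ≠ g q := fun h => hpq (hg p hp q hq h)
    have h2 : (1 : ℝ) ≤ |(g p : ℝ) - g q| := by
      have : (1 : ℤ) ≤ |(g p : ℤ) - g q| := Int.one_le_abs (by omega)
      exact_mod_cast this
    simp only [z]
    rw [← sub_smul, norm_smul, he, mul_one, ← mul_sub, norm_mul, Real.norm_eq_abs,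
      Real.norm_eq_abs]
    norm_num
    linarith
  refine ⟨P.biUnion fun p => (A p).image fun a => z p + p + a,
    P.biUnion fun p => (B p).image fun b => z p + b, ?_, ?_, ?_⟩
  · have hx : (0 : ℝ) ≤ (11 / 3 / s) ^ k := by positivity
    have c1 : ((P.biUnion fun p => (A p).image fun a => z p + p + a).card : ℝ) ≤
        3 ^ (k + 1) * (11 / 3 / s) ^ k := by
      calc ((P.biUnion fun p => (A p).image fun a => z p + p + a).card : ℝ)
          ≤ ∑ p ∈ P, (((A p).image fun a => z p + p + a).card : ℝ) := by
            exact_mod_cast Finset.card_biUnion_le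
        _ ≤ ∑ p ∈ P, (11 / 3 / s) ^ k := by
            apply Finset.sum_le_sum
            intro p hp
            exact le_trans (by exact_mod_cast Finset.card_image_le) (hAB p hp).2.2.1
        _ = P.card * (11 / 3 / s) ^ k := by simp
        _ ≤ _ := by
            apply mul_le_mul_of_nonneg_right _ hx
            norm_num at hPc
            exact hPc
    have c2 : ((P.biUnion fun p => (B p).image fun b => z p + b).card : ℝ) ≤
        3 ^ (k + 1) * (11 / 3 / s) ^ k := by
      calc ((P.biUnion fun p => (B p).image fun b => z p + b).card : ℝ)
          ≤ ∑ p ∈ P, (((B p).image fun b => z p + b).card : ℝ) := by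
            exact_mod_cast Finset.card_biUnion_le
        _ ≤ ∑ p ∈ P, (11 / 3 / s) ^ k := by
            apply Finset.sum_le_sum
            intro p hp
            exact le_trans (by exact_mod_cast Finset.card_image_le) (hAB p hp).2.2.2.1
        _ = P.card * (11 / 3 / s) ^ k := by simp
        _ ≤ _ := by
            apply mul_le_mul_of_nonneg_right _ hx
            norm_num at hPc
            exact hPc
    push_cast
    have e1 : (3 : ℝ) ^ (k + 1) * (11 / 3 / s) ^ k = 3 * (11 / s) ^ k := by
      rw [pow_succ, mul_comm ((3 : ℝ) ^ k), mul_assoc, ← mul_pow]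
      congr 2
      ring
    have e2 : (66 / s) ^ k = 6 ^ k * (11 / s) ^ k := by
      rw [← mul_pow]; congr 1; ring
    have h6 : (6 : ℝ) ≤ 6 ^ k := le_self_pow₀ (by norm_num) (by omega)
    have h11 : (0 : ℝ) ≤ (11 / s) ^ k := by positivity
    rw [e1] at c1 c2
    rw [e2]
    nlinarith
  · intro x hx y hy
    simp only [Finset.mem_biUnion, Finset.mem_image] at hx hy
    obtain ⟨p, hp, a, ha, rfl⟩ := hx
    obtain ⟨q, hq, b, hb, rfl⟩ := hy
    obtain ⟨ha1, ha2⟩ := (hAB p hp).1 a ha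
    obtain ⟨hb1, hb2⟩ := (hAB q hq).2.1 b hb
    by_cases hpq : p = q
    · subst hpq
      have e1 : z p + p + a - (z p + b) = p + (a - b) := by abel
      rw [e1]
      have h2 : inner ℝ p (p + (a - b)) = 1 := by
        rw [inner_add_right, inner_sub_right, ha2, hb2, real_inner_self_eq_norm_sq, hP' p hp]
        norm_num
      have h3 := real_inner_le_norm p (p + (a - b))
      rw [h2, hP' p hp] at h3
      linarith
    · have h1 := hz p hp q hq hpq
      have e1 : z p - z q = (z p + p + a - (z q + b)) - p - a + b := by abel
      rw [e1] at h1
      have h2 := norm_add_le ((z p + p + a - (z q + b)) - p - a) b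
      have h3 := norm_sub_le ((z p + p + a - (z q + b)) - p) a
      have h4 := norm_sub_le (z p + p + a - (z q + b)) p
      rw [hP' p hp] at h4
      linarith
  · intro u hu
    obtain ⟨p, hp, hpu⟩ := hPn u (by simpa using hu)
    obtain ⟨l, hl, hl1, hl2⟩ := aux_geom p u (hP' p hp) hu hpu
    obtain ⟨a, ha, b, hb, hab⟩ := (hAB p hp).2.2.2.2 _ hl1 hl2
    refine ⟨z p + p + a, ?_, z p + b, ?_, l, hl, ?_⟩
    · exact Finset.mem_biUnion.2 ⟨p, hp, Finset.mem_image_of_mem _ ha⟩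
    · exact Finset.mem_biUnion.2 ⟨p, hp, Finset.mem_image_of_mem _ hb⟩
    · convert hab using 2
      abel

lemma aux_lpNorm {d : ℕ} (x : Fin d → ℝ) : lpNorm 2 x = ‖WithLp.toLp 2 x‖ := by
  rw [EuclideanSpace.norm_eq, lpNorm, if_neg (by norm_num), Real.sqrt_eq_rpow]
  simp

/-- Arrange two nonempty finite sets into a labeled list of length `N`. -/
lemma aux_enum {F : Type*} (S1 S2 : Finset F) (N : ℕ) (h1 : S1.Nonempty)
    (hN : S1.card + S2.card ≤ N) :
    ∃ (X : Fin N → F) (Y : Fin N → ℕ),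
      (∀ i, (Y i = 1 ∧ X i ∈ S1) ∨ (Y i = 2 ∧ X i ∈ S2)) ∧
      (∀ x ∈ S1, ∃ i, X i = x ∧ Y i = 1) ∧ (∀ x ∈ S2, ∃ i, X i = x ∧ Y i = 2) := by
  obtain ⟨x0, hx0⟩ := h1
  have : Nonempty (S1 ⊕ S2) := ⟨Sum.inl ⟨x0, hx0⟩⟩
  have hc : Fintype.card (S1 ⊕ S2) ≤ Fintype.card (Fin N) := by simpa using hN
  obtain ⟨f⟩ := Function.Embedding.nonempty_of_card_le hc
  have hinv := Function.leftInverse_invFun f.injective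
  refine ⟨fun i => Sum.elim Subtype.val Subtype.val (Function.invFun f i),
    fun i => Sum.elim (fun _ => 1) (fun _ => 2) (Function.invFun f i), ?_, ?_, ?_⟩
  · intro i
    rcases h : Function.invFun f i with a | a
    · left; simp [h]
    · right; simp [h]
  · intro x hx
    refine ⟨f (Sum.inl ⟨x, hx⟩), ?_, ?_⟩ <;> simp [hinv (Sum.inl ⟨x, hx⟩)]
  · intro x hx
    refine ⟨f (Sum.inr ⟨x, hx⟩), ?_, ?_⟩ <;> simp [hinv (Sum.inr ⟨x, hx⟩)]

lemma aux_num (N k : ℕ) (r : ℝ) (hN : 2 ≤ N) (hk : 1 ≤ k) (hr : 0 < r)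
    (h : r > 4832 * (N : ℝ) ^ (-(2 : ℝ) / (k : ℝ))) : (66 / Real.sqrt r) ^ k ≤ (N : ℝ) := by
  have hNp : (0 : ℝ) < N := by exact_mod_cast (by omega : 0 < N)
  have hkp : (0 : ℝ) < k := by exact_mod_cast hk
  have hs : 0 < Real.sqrt r := Real.sqrt_pos.2 hr
  set y : ℝ := (N : ℝ) ^ ((1 : ℝ) / k) with hy
  have hyp : 0 < y := Real.rpow_pos_of_pos hNp _
  have hyk : y ^ k = N := by
    rw [hy, ← Real.rpow_natCast, ← Real.rpow_mul hNp.le]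
    rw [one_div_mul_cancel hkp.ne', Real.rpow_one]
  have hy2 : (N : ℝ) ^ (-(2 : ℝ) / (k : ℝ)) * y ^ 2 = 1 := by
    rw [hy, ← Real.rpow_natCast _ 2, ← Real.rpow_mul hNp.le, ← Real.rpow_add hNp]
    have : (-(2 : ℝ) / k + 1 / k * ((2 : ℕ) : ℝ)) = 0 := by push_cast; ring
    rw [this, Real.rpow_zero]
  rw [← hyk]
  apply pow_le_pow_left₀ (by positivity)
  rw [div_le_iff₀ hs]
  refine (abs_le_of_sq_le_sq' ?_ (by positivity)).2
  rw [mul_pow, Real.sq_sqrt hr.le]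
  have : 4832 * ((N : ℝ) ^ (-(2 : ℝ) / (k : ℝ)) * y ^ 2) ≤ r * y ^ 2 := by
    rw [← mul_assoc]
    exact mul_le_mul_of_nonneg_right h.le (by positivity)
  rw [hy2] at this
  linarith

open Module in
/-- **Existence of a non-preservable dataset when the ratio is large**. -/
theorem not_preservable_of_large_ratio
    (N d k : ℕ) (σ δ : ℝ)
    (hN : 2 ≤ N) (hd : 2 ≤ d) (hk1 : 1 ≤ k) (hkd : k ≤ d - 1)
    (hσ : 0 < σ) (hδ : 0 < δ) (hσδ : σ < δ / 2)
    (hratio : 2 * σ / δ > 4832 * (N : ℝ) ^ (-(2 : ℝ) / (k : ℝ))) :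
    ∃ (X : Fin N → Fin d → ℝ) (Y : Fin N → ℕ),
      (∀ i, 1 ≤ Y i ∧ Y i ≤ 2) ∧ Separated 2 δ X Y ∧
      ∀ T : Matrix (Fin k) (Fin d) ℝ, T.rank = k → ¬ Preserves σ X Y T := by
  have hr : 0 < 2 * σ / δ := by positivity
  have hr1 : 2 * σ / δ < 1 := by rw [div_lt_one hδ]; linarith
  have hNum := aux_num N k _ hN hk1 hr hratio
  set s := Real.sqrt (2 * σ / δ) with hsdef
  have hs : 0 < s := Real.sqrt_pos.2 hr
  have hs1 : s < 1 := by rw [hsdef, Real.sqrt_lt' one_pos]; simpa using hr1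
  have hs2 : s ^ 2 * δ = 2 * σ := by
    rw [hsdef, Real.sq_sqrt hr.le]; field_simp
  -- a `(k+1)`-dimensional subspace
  obtain ⟨W, hW⟩ : ∃ W : Submodule ℝ (EuclideanSpace ℝ (Fin d)), finrank ℝ W = k + 1 := by
    have hle : k + 1 ≤ d := by omega
    have hli := (EuclideanSpace.basisFun (Fin d) ℝ).toBasis.linearIndependent.comp
      (Fin.castLE hle) (Fin.castLE_injective hle)
    refine ⟨_, (finrank_span_eq_card hli).trans (by simp)⟩
  obtain ⟨S1, S2, hcard, hsep, hcov⟩ := aux_main (F := W) k hk1 hW s hs hs1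
  have hcard' : S1.card + S2.card ≤ N := by exact_mod_cast hcard.trans hNum
  have : Nontrivial W := Module.nontrivial_of_finrank_pos (R := ℝ) (by omega)
  obtain ⟨e, he⟩ := exists_norm_eq W (zero_le_one (α := ℝ))
  obtain ⟨x0, hx0, y0, hy0, -⟩ := hcov e he
  obtain ⟨⟨x1, y1⟩, hm, hmin⟩ := Finset.exists_min_image (S1 ×ˢ S2) (fun q => ‖q.1 - q.2‖)
    ⟨(x0, y0), by simp [hx0, hy0]⟩
  simp only [Finset.mem_product] at hm
  obtain ⟨X, Y, hXY, hX1, hX2⟩ := aux_enum S1 S2 N ⟨x0, hx0⟩ hcard'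
  set m := ‖x1 - y1‖ with hmdef
  have hm1 : 1 ≤ m := hsep x1 hm.1 y1 hm.2
  have hmp : 0 < m := by linarith
  have hminS : ∀ x ∈ S1, ∀ y ∈ S2, m ≤ ‖x - y‖ := fun x hx y hy =>
    hmin (x, y) (by simp [hx, hy])
  set t : ℝ := δ / m with ht
  have htp : 0 < t := by positivity
  have htδ : t ≤ δ := div_le_self hδ.le hm1
  have htm : t * m = δ := by rw [ht]; field_simp
  let X' : Fin N → Fin d → ℝ := fun i => WithLp.ofLp (t • (X i : EuclideanSpace ℝ (Fin d)))
  have hdist : ∀ i j, lpNorm 2 (X' i - X' j) = t * ‖X i - X j‖ := by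
    intro i j
    rw [aux_lpNorm]
    have : WithLp.toLp 2 (X' i - X' j) = t • ((X i - X j : W) : EuclideanSpace ℝ (Fin d)) := by
      simp [X', smul_sub]
    rw [this, norm_smul, Real.norm_of_nonneg htp.le, Submodule.coe_norm]
  refine ⟨X', Y, ?_, ⟨?_, ?_⟩, ?_⟩
  · intro i
    rcases hXY i with h | h <;> simp [h.1]
  · intro i j hij
    rw [hdist, ← htm]
    apply mul_le_mul_of_nonneg_left _ htp.le
    rcases hXY i with h | h <;> rcases hXY j with h' | h'
    · exact absurd (h.1.trans h'.1.symm) hij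
    · exact hminS _ h.2 _ h'.2
    · rw [norm_sub_rev]; exact hminS _ h'.2 _ h.2
    · exact absurd (h.1.trans h'.1.symm) hij
  · obtain ⟨i, hi, hi'⟩ := hX1 x1 hm.1
    obtain ⟨j, hj, hj'⟩ := hX2 y1 hm.2
    refine ⟨i, j, by simp [hi', hj'], ?_⟩
    rw [hdist, hi, hj, ← hmdef, htm]
  · intro T _ hT
    let L : W →ₗ[ℝ] (Fin k → ℝ) := (Matrix.mulVecLin T) ∘ₗ
      (WithLp.linearEquiv 2 ℝ (Fin d → ℝ)).toLinearMap ∘ₗ W.subtype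
    have hker : LinearMap.ker L ≠ ⊥ := LinearMap.ker_ne_bot_of_finrank_lt (by simp [hW])
    obtain ⟨v, hv, hv0⟩ := Submodule.exists_mem_ne_zero_of_ne_bot hker
    have hvn : ‖v‖ ≠ 0 := norm_ne_zero_iff.2 hv0
    obtain ⟨x, hx, y, hy, l, hl, hxy⟩ := hcov (‖v‖⁻¹ • v) (by
      rw [norm_smul, norm_inv, norm_norm, inv_mul_cancel₀ hvn])
    obtain ⟨i, hi, hi'⟩ := hX1 x hx
    obtain ⟨j, hj, hj'⟩ := hX2 y hy
    -- the error vector and the kernel vector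
    let w : W := l • (‖v‖⁻¹ • v)
    have hw0 : w ≠ 0 := smul_ne_zero hl (smul_ne_zero (inv_ne_zero hvn) hv0)
    have hLw : L w = 0 := by
      have : L v = 0 := hv
      simp only [w, map_smul, this, smul_zero]
    let q : W := (t / 2) • (x - y - w)
    have hq : ‖q‖ ≤ σ := by
      rw [norm_smul, Real.norm_of_nonneg (by positivity)]
      have h1 : ‖x - y - w‖ ≤ s ^ 2 := hxy
      have h2 : t / 2 * ‖x - y - w‖ ≤ δ / 2 * s ^ 2 := by gcongr
      linarith
    have key := hT i j (by simp [hi', hj']) (X' i - WithLp.ofLp (q : EuclideanSpace ℝ (Fin d)))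
      (X' j + WithLp.ofLp (q : EuclideanSpace ℝ (Fin d)))
      (by
        rw [aux_lpNorm, sub_sub_cancel_left, WithLp.toLp_neg, norm_neg, WithLp.toLp_ofLp]
        exact hq)
      (by
        rw [aux_lpNorm, add_sub_cancel_left, WithLp.toLp_ofLp]
        exact hq)
    have hdiff : (X' i - WithLp.ofLp (q : EuclideanSpace ℝ (Fin d))) -
        (X' j + WithLp.ofLp (q : EuclideanSpace ℝ (Fin d))) =
        WithLp.ofLp ((t • w : W) : EuclideanSpace ℝ (Fin d)) := by
      have h1 : t • w = t • x - q - (t • y + q) := by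
        simp only [q]
        module
      rw [h1]
      simp [X', hi, hj]
    rw [← Matrix.mulVec_sub, hdiff, aux_lpNorm, aux_lpNorm, WithLp.toLp_ofLp] at key
    have hz : T.mulVec (WithLp.ofLp ((t • w : W) : EuclideanSpace ℝ (Fin d))) = 0 := by
      have : L (t • w) = 0 := by rw [map_smul, hLw, smul_zero]
      exact this
    rw [hz, WithLp.toLp_zero, norm_zero] at key
    have : t • w = 0 := by
      rw [← norm_le_zero_iff]
      exact key
    exact (smul_ne_zero htp.ne' hw0) this

end
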